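/- Let β be a nonempty permutation that is itself a 2413-balloon (i.e. β = B(γ) for some nonempty permutation γ), and let π = B(β). Then μ(1,π) = 2·μ(1,β). -/

import Mathlib

/-!
The permutation pattern poset and its Möbius function.

A permutation of length `n` is represented as an element of the symmetric
group on `Fin n`; the collection of all permutations of all lengths is the
sigma type `PPerm`.  Pattern containment `PPerm.Le` makes `PPerm` into the
permutation pattern poset, and `mu` is its Möbius function, defined by the
usual recursion `μ(σ,σ) = 1`, `μ(σ,π) = -∑_{σ ≤ λ < π} μ(σ,λ)` for `σ < π`
and `μ(σ,π) = 0` otherwise.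
-/

open scoped Classical

/-- A permutation of an arbitrary finite length `n`, as an element of the
symmetric group on `Fin n`. -/
abbrev PPerm : Type := Σ n : ℕ, Equiv.Perm (Fin n)

namespace PPerm

/-- Classical pattern containment `σ ≤ π`: there is a strictly increasing map
of positions along which `π` realises the same relative order as `σ`. -/
def Le (σ π : PPerm) : Prop :=
  ∃ f : Fin σ.1 → Fin π.1, StrictMono f ∧
    ∀ a b : Fin σ.1, σ.2 a < σ.2 b ↔ π.2 (f a) < π.2 (f b)

/-- Strict pattern containment. -/
def Lt (σ π : PPerm) : Prop := Le σ π ∧ σ ≠ π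

/-- The permutation `1` of length one. -/
def one : PPerm := ⟨1, 1⟩

/-- The direct sum `α ⊕ β` of two permutations: `β` is placed after and
above `α`. -/
def dsum (α β : PPerm) : PPerm :=
  ⟨α.1 + β.1, finSumFinEquiv.symm.trans ((Equiv.sumCongr α.2 β.2).trans finSumFinEquiv)⟩

end PPerm

/-- Fuelled recursion computing the Möbius function of the permutation
pattern poset.  Any `λ` with `σ ≤ λ < π` has length `< |π|`, so for any
fuel `≥ |π| + 1` this computes the standard recursion
`μ(σ,σ) = 1`, `μ(σ,π) = -∑_{σ ≤ λ < π} μ(σ,λ)` for `σ < π`, and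
`μ(σ,π) = 0` when `σ ≰ π`. -/
noncomputable def muAux : ℕ → PPerm → PPerm → ℤ
  | 0, _, _ => 0
  | n + 1, σ, π =>
    if σ = π then 1
    else if PPerm.Le σ π then
      - ∑ m ∈ Finset.range π.1,
          ∑ p ∈ Finset.univ.filter
              (fun p : Equiv.Perm (Fin m) => PPerm.Le σ ⟨m, p⟩ ∧ PPerm.Le ⟨m, p⟩ π),
            muAux n σ ⟨m, p⟩
    else 0

/-- The Möbius function of the permutation pattern poset. -/
noncomputable def mu (σ π : PPerm) : ℤ := muAux (π.1 + 1) σ π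

/-- The closed interval `[σ, π]` of the permutation pattern poset, as a
finset (any `λ ≤ π` has length `≤ |π|`). -/
noncomputable def intervalCC (σ π : PPerm) : Finset PPerm :=
  (Finset.range (π.1 + 1)).biUnion fun m =>
    (Finset.univ.filter fun p : Equiv.Perm (Fin m) =>
        PPerm.Le σ ⟨m, p⟩ ∧ PPerm.Le ⟨m, p⟩ π).image fun p => (⟨m, p⟩ : PPerm)

/-- The half-open interval `[σ, π)` of the permutation pattern poset. -/
noncomputable def intervalCO (σ π : PPerm) : Finset PPerm :=
  (intervalCC σ π).filter fun lam => lam ≠ π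

/-- `π` is the 2413-balloon `B(β)` of `β`: writing `b = |β|`, the permutation
`π` has length `b + 4` and (1-indexed) entry sequence
`2, b+4, β(1)+2, …, β(b)+2, 1, b+3`.  In the 0-indexed representation used
here: position `0` has value `1`, position `1` has value `b+3`, position
`t+2` has value `β(t)+2` for `t < b`, position `b+2` has value `0`, and
position `b+3` has value `b+2`. -/
def IsBalloon2413 (β π : PPerm) : Prop :=
  π.1 = β.1 + 4 ∧
    ∀ p : Fin π.1,
      ((p : ℕ) = 0 → (π.2 p : ℕ) = 1) ∧
      ((p : ℕ) = 1 → (π.2 p : ℕ) = β.1 + 3) ∧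
      (∀ t : Fin β.1, (p : ℕ) = (t : ℕ) + 2 → (π.2 p : ℕ) = (β.2 t : ℕ) + 2) ∧
      ((p : ℕ) = β.1 + 2 → (π.2 p : ℕ) = 0) ∧
      ((p : ℕ) = β.1 + 3 → (π.2 p : ℕ) = β.1 + 2)

/-!
Deleting one of the four outer entries of the balloon `B(β)` leaves `β` with three successive
corner entries around it, so the patterns of `B(β)` are the balloons `B(β')` with `β' ≤ β` and the
patterns of these four permutations. A corner added to a permutation matters for the containment
of `l` only if `l` has an entry in the same corner, and a case distinction on the corner entries of
`l` shows that, unless `l` is itself a balloon, inclusion–exclusion over the four lower sets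
correctly computes whether `l ≤ B(β)`. Summed over `l` with weights `μ(1, l)`, all the
inclusion–exclusion terms vanish but that of `β`. What is left says that
`D(l) = μ(1, B(l)) - μ(1, l) - [l is a balloon] μ(1, l)` satisfies `∑_{l ≤ β} D(l) = 0` for every
nonempty `β`, where the sum includes the empty permutation, and therefore `D` vanishes in all
lengths `≥ 2`.
-/

namespace PPerm

open Equiv Fin

/-! ### Inserting and deleting entries -/

section Entries

variable {n : ℕ}

/-- The permutation obtained from `σ` by inserting a new entry at position `i` with value `j`,
shifting the old positions and values past them. -/
def insertEntry (i j : Fin (n + 1)) (σ : Perm (Fin n)) : Perm (Fin (n + 1)) :=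
  (finSuccEquiv' i).trans ((optionCongr σ).trans (finSuccEquiv' j).symm)

/-- The permutation obtained from `p` by deleting its entry at position `i` and standardising
the remaining entries. -/
def eraseEntry (p : Perm (Fin (n + 1))) (i : Fin (n + 1)) : Perm (Fin n) :=
  removeNone ((finSuccEquiv' i).symm.trans (p.trans (finSuccEquiv' (p i))))

@[simp]
theorem insertEntry_self (i j : Fin (n + 1)) (σ : Perm (Fin n)) : insertEntry i j σ i = j := by
  simp [insertEntry]

@[simp]
theorem insertEntry_succAbove (i j : Fin (n + 1)) (σ : Perm (Fin n)) (k : Fin n) :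
    insertEntry i j σ (i.succAbove k) = j.succAbove (σ k) := by
  simp [insertEntry]

theorem insertEntry_last_castSucc (j : Fin (n + 1)) (σ : Perm (Fin n)) (k : Fin n) :
    insertEntry (last n) j σ k.castSucc = j.succAbove (σ k) := by
  rw [← succAbove_last_apply, insertEntry_succAbove]

theorem insertEntry_zero_succ (j : Fin (n + 1)) (σ : Perm (Fin n)) (k : Fin n) :
    insertEntry 0 j σ k.succ = j.succAbove (σ k) := by
  rw [← succAbove_zero_apply, insertEntry_succAbove]

theorem eq_insertEntry_iff {p : Perm (Fin (n + 1))} {i j : Fin (n + 1)} {σ : Perm (Fin n)} :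
    p = insertEntry i j σ ↔ p i = j ∧ ∀ k, p (i.succAbove k) = j.succAbove (σ k) := by
  simp [Equiv.ext_iff, Fin.forall_iff_succAbove i]

theorem succAbove_eraseEntry (p : Perm (Fin (n + 1))) (i : Fin (n + 1)) (k : Fin n) :
    (p i).succAbove (eraseEntry p i k) = p (i.succAbove k) := by
  obtain ⟨m, hm⟩ := exists_succAbove_eq (p.injective.ne (succAbove_ne i k))
  have h := removeNone_some ((finSuccEquiv' i).symm.trans (p.trans (finSuccEquiv' (p i))))
    (x := k) ⟨m, by simp [← hm]⟩
  simpa [← hm, eraseEntry] using h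

@[simp]
theorem insertEntry_eraseEntry (p : Perm (Fin (n + 1))) (i : Fin (n + 1)) :
    insertEntry i (p i) (eraseEntry p i) = p :=
  (eq_insertEntry_iff.2 ⟨rfl, fun k => (succAbove_eraseEntry p i k).symm⟩).symm

@[simp]
theorem eraseEntry_insertEntry_self (i j : Fin (n + 1)) (σ : Perm (Fin n)) :
    eraseEntry (insertEntry i j σ) i = σ := by
  ext k
  have h := succAbove_eraseEntry (insertEntry i j σ) i k
  rw [insertEntry_succAbove, insertEntry_self] at h
  rw [succAbove_right_injective h]

theorem insertEntry_insertEntry (i j : Fin (n + 2)) (k l : Fin (n + 1)) (σ : Perm (Fin n)) :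
    insertEntry i j (insertEntry k l σ) = insertEntry (i.succAbove k) (j.succAbove l)
      (insertEntry (k.predAbove i) (l.predAbove j) σ) := by
  refine eq_insertEntry_iff.2 ⟨by simp, fun m => ?_⟩
  obtain rfl | ⟨m, rfl⟩ := eq_self_or_eq_succAbove (k.predAbove i) m
  · rw [succAbove_succAbove_predAbove, insertEntry_self, insertEntry_self,
      succAbove_succAbove_predAbove]
  · simp [succAbove_succAbove_succAbove_predAbove]

theorem eraseEntry_insertEntry_succAbove (i j : Fin (n + 2)) (k : Fin (n + 1))
    (σ : Perm (Fin (n + 1))) :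
    eraseEntry (insertEntry i j σ) (i.succAbove k) =
      insertEntry (k.predAbove i) ((σ k).predAbove j) (eraseEntry σ k) := by
  conv_lhs => rw [← insertEntry_eraseEntry σ k, insertEntry_insertEntry,
    eraseEntry_insertEntry_self]

theorem eraseEntry_insertEntry_last_castSucc (j : Fin (n + 2)) (σ : Perm (Fin (n + 1)))
    (k : Fin (n + 1)) : eraseEntry (insertEntry (last _) j σ) k.castSucc =
      insertEntry (last _) ((σ k).predAbove j) (eraseEntry σ k) := by
  rw [← succAbove_last, eraseEntry_insertEntry_succAbove, predAbove_right_last]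

theorem eraseEntry_insertEntry_zero_succ (j : Fin (n + 2)) (σ : Perm (Fin (n + 1)))
    (k : Fin (n + 1)) : eraseEntry (insertEntry 0 j σ) k.succ =
      insertEntry 0 ((σ k).predAbove j) (eraseEntry σ k) := by
  rw [← succAbove_zero, eraseEntry_insertEntry_succAbove, predAbove_right_zero]

end Entries

/-! ### Containment and deletions -/

local infix:50 " ≼ " => Le

theorem le_refl (π : PPerm) : π ≼ π := ⟨id, strictMono_id, fun _ _ => Iff.rfl⟩

theorem le_trans {ρ σ τ : PPerm} : ρ ≼ σ → σ ≼ τ → ρ ≼ τ := by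
  rintro ⟨f, hf, hfo⟩ ⟨g, hg, hgo⟩
  exact ⟨g ∘ f, hg.comp hf, fun a b => (hfo a b).trans (hgo _ _)⟩

theorem length_le_of_le {σ π : PPerm} : σ ≼ π → σ.1 ≤ π.1 := by
  rintro ⟨f, hf, -⟩
  simpa using Fintype.card_le_of_injective f hf.injective

theorem eq_of_le_of_length_le {σ π : PPerm} (h : σ ≼ π) (hlen : π.1 ≤ σ.1) : σ = π := by
  obtain ⟨n, σ⟩ := σ
  obtain ⟨m, π⟩ := π
  obtain rfl : n = m := (length_le_of_le h).antisymm hlen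
  obtain ⟨f, hf, hfo⟩ := h
  obtain rfl : f = id := hf.eq_id
  have hmono : StrictMono (π ∘ σ.symm) := fun a b hab => by
    simpa [hab] using hfo (σ.symm a) (σ.symm b)
  have hid := hmono.eq_id
  congr 1
  ext k
  simpa using congrArg Fin.val (congrFun hid (σ k)).symm

theorem le_of_length_le_one {σ π : PPerm} (hσ : σ.1 ≤ 1) (hπ : 0 < π.1) : σ ≼ π := by
  have : Subsingleton (Fin σ.1) := Fin.subsingleton_iff_le_one.2 hσ
  exact ⟨fun _ => ⟨0, hπ⟩, Subsingleton.strictMono _, fun a b => by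
    simp [Subsingleton.elim a b]⟩

/-- `IsDeletion a b`: the permutation `a` arises from `b` by deleting a single entry. Containment
is the reflexive transitive closure of this relation. -/
def IsDeletion (a b : PPerm) : Prop :=
  ∃ (n : ℕ) (p : Perm (Fin (n + 1))) (i : Fin (n + 1)), b = ⟨n + 1, p⟩ ∧ a = ⟨n, eraseEntry p i⟩

theorem isDeletion_mk_succ {n : ℕ} {a : PPerm} {p : Perm (Fin (n + 1))} :
    IsDeletion a ⟨n + 1, p⟩ ↔ ∃ i, (⟨n, eraseEntry p i⟩ : PPerm) = a := by
  constructor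
  · rintro ⟨m, q, i, hq, rfl⟩
    cases hq
    exact ⟨i, rfl⟩
  · rintro ⟨i, rfl⟩
    exact ⟨n, p, i, rfl, rfl⟩

theorem IsDeletion.length_eq {a b : PPerm} : IsDeletion a b → b.1 = a.1 + 1 := by
  rintro ⟨n, p, i, rfl, rfl⟩
  rfl

theorem not_isDeletion_of_length_eq_zero {a b : PPerm} (hb : b.1 = 0) : ¬ IsDeletion a b :=
  fun h => by have := h.length_eq; lia

theorem IsDeletion.le {a b : PPerm} : IsDeletion a b → a ≼ b := by
  rintro ⟨n, p, i, rfl, rfl⟩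
  refine ⟨i.succAbove, strictMono_succAbove i, fun k l => ?_⟩
  simp [← succAbove_eraseEntry p i]

theorem le_iff_eq_or_le_deletion {l b : PPerm} : l ≼ b ↔ l = b ∨ ∃ a, IsDeletion a b ∧ l ≼ a := by
  refine ⟨fun h => ?_, ?_⟩
  · obtain ⟨_ | n, p⟩ := b
    · exact .inl (eq_of_le_of_length_le h (Nat.zero_le _))
    obtain ⟨f, hf, hfo⟩ := h
    by_cases hsurj : Function.Surjective f
    · exact .inl (eq_of_le_of_length_le ⟨f, hf, hfo⟩
        (by simpa using Fintype.card_le_of_surjective f hsurj))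
    obtain ⟨i, hi⟩ := not_forall.1 hsurj
    choose g hg using fun k => exists_succAbove_eq fun h => hi ⟨k, h⟩
    refine .inr ⟨_, isDeletion_mk_succ.2 ⟨i, rfl⟩, g, fun k m hkm => ?_, fun k m => ?_⟩
    · rw [← (strictMono_succAbove i).lt_iff_lt, hg, hg]
      exact hf hkm
    · rw [hfo, ← hg, ← hg, ← succAbove_eraseEntry, ← succAbove_eraseEntry,
        (strictMono_succAbove _).lt_iff_lt]
  · rintro (rfl | ⟨a, hab, hla⟩)
    · exact le_refl l
    · exact le_trans hla hab.le

theorem deletion_induction {P : PPerm → Prop} (ih : ∀ b, (∀ a, IsDeletion a b → P a) → P b)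
    (b : PPerm) : P b :=
  (measure Sigma.fst).wf.induction b fun b h => ih b fun a hab =>
    h a (show a.1 < b.1 by have := hab.length_eq; lia)

theorem map_le_map_of_isDeletion {F : PPerm → PPerm}
    (hF : ∀ a b, IsDeletion a b → F a ≼ F b) {a b : PPerm} (h : a ≼ b) : F a ≼ F b := by
  induction b using deletion_induction with
  | ih b ih =>
    obtain rfl | ⟨c, hcb, hac⟩ := le_iff_eq_or_le_deletion.1 h
    · exact le_refl _
    · exact le_trans (ih c hcb hac) (hF c b hcb)

theorem isDeletion_insertEntry {n : ℕ} {a : PPerm} {i j : Fin (n + 2)} {σ : Perm (Fin (n + 1))} :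
    IsDeletion a ⟨n + 2, insertEntry i j σ⟩ ↔ (⟨n + 1, σ⟩ : PPerm) = a ∨ ∃ k : Fin (n + 1),
      (⟨n + 1, insertEntry (k.predAbove i) ((σ k).predAbove j) (eraseEntry σ k)⟩ : PPerm) = a := by
  simp [isDeletion_mk_succ, Fin.exists_iff_succAbove i, eraseEntry_insertEntry_succAbove]

theorem le_map_iff_of_isDeletion {ι : Type*} {F : PPerm → PPerm} {G : ι → PPerm → PPerm}
    (hG : ∀ i {a b}, a ≼ b → G i a ≼ G i b)
    (hF : ∀ {a b}, IsDeletion a (F b) ↔ (∃ i, G i b = a) ∨ ∃ b', IsDeletion b' b ∧ F b' = a)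
    {l b : PPerm} : l ≼ F b ↔ (∃ i, l ≼ G i b) ∨ ∃ b', b' ≼ b ∧ F b' = l := by
  constructor
  · intro h
    induction b using deletion_induction with
    | ih b ih =>
      obtain rfl | ⟨a, hab, hla⟩ := le_iff_eq_or_le_deletion.1 h
      · exact .inr ⟨b, le_refl b, rfl⟩
      obtain ⟨i, rfl⟩ | ⟨b', hb', rfl⟩ := hF.1 hab
      · exact .inl ⟨i, hla⟩
      obtain ⟨i, hi⟩ | ⟨b'', hb'', rfl⟩ := ih b' hb' hla
      · exact .inl ⟨i, le_trans hi (hG i hb'.le)⟩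
      · exact .inr ⟨b'', le_trans hb'' hb'.le, rfl⟩
  · rintro (⟨i, hi⟩ | ⟨b', hb', rfl⟩)
    · exact le_trans hi (hF.2 (.inl ⟨i, rfl⟩)).le
    · exact map_le_map_of_isDeletion (fun a b hab => (hF.2 (.inr ⟨a, hab, rfl⟩)).le) hb'

/-! ### Corners -/

/-- The last element of `Fin (n + 1)` if `s` holds and the first one otherwise. -/
def endpoint {n : ℕ} (s : Bool) : Fin (n + 1) := bif s then last n else 0

@[simp]
theorem predAbove_endpoint {n : ℕ} (s : Bool) (k : Fin (n + 1)) :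
    k.predAbove (endpoint s) = endpoint s := by
  cases s
  · exact predAbove_right_zero
  · exact predAbove_right_last

@[simp]
theorem succAbove_endpoint_not {n : ℕ} (s : Bool) :
    (endpoint s : Fin (n + 2)).succAbove (endpoint !s) = endpoint !s := by
  cases s <;> simp [endpoint]

theorem endpoint_injective {n : ℕ} : Function.Injective (endpoint : Bool → Fin (n + 2)) := by
  rintro (_ | _) (_ | _) <;> simp [endpoint, Fin.ext_iff]

/-- Corners are numbered counterclockwise by `ZMod 4`, from `0` at the bottom left; this says
that `c` is one of the two on the right. -/
def isRight (c : ZMod 4) : Bool := c = 1 ∨ c = 2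

/-- The corner `c` is one of the two at the top. -/
def isTop (c : ZMod 4) : Bool := c = 2 ∨ c = 3

theorem isRight_add_two : ∀ c, isRight (c + 2) = !isRight c := by decide

theorem isTop_add_two : ∀ c, isTop (c + 2) = !isTop c := by decide

theorem corner_ext : ∀ {c d}, isRight c = isRight d → isTop c = isTop d → c = d := by decide

/-- The permutation `π` with a new entry in the corner `c` of its diagram, so that
`addCorner 2 π` is `π ⊕ 1` and `addCorner 3 π` is `1 ⊖ π`. -/
def addCorner (c : ZMod 4) (π : PPerm) : PPerm :=
  ⟨π.1 + 1, insertEntry (endpoint (isRight c)) (endpoint (isTop c)) π.2⟩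

theorem addCorner_length (c : ZMod 4) (u : PPerm) : (addCorner c u).1 = u.1 + 1 := rfl

theorem addCorner_length_pos (c : ZMod 4) (u : PPerm) : 0 < (addCorner c u).1 :=
  Nat.succ_pos _

theorem addCorner_injective (c : ZMod 4) : Function.Injective (addCorner c) := by
  rintro ⟨n, σ⟩ ⟨m, τ⟩ h
  obtain rfl : n = m := by simpa [addCorner] using congrArg Sigma.fst h
  simpa using congrArg (eraseEntry · (endpoint (isRight c))) (eq_of_heq (Sigma.mk.inj h).2)

theorem addCorner_opposite_comm (c : ZMod 4) (π : PPerm) :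
    addCorner c (addCorner (c + 2) π) = addCorner (c + 2) (addCorner c π) := by
  simp only [addCorner, isRight_add_two, isTop_add_two]
  rw [insertEntry_insertEntry]
  simp only [succAbove_endpoint_not, predAbove_endpoint]

theorem isDeletion_addCorner {c : ZMod 4} {a b : PPerm} :
    IsDeletion a (addCorner c b) ↔ b = a ∨ ∃ b', IsDeletion b' b ∧ addCorner c b' = a := by
  obtain ⟨_ | n, σ⟩ := b
  · have hσ (p : Perm (Fin 1)) (i) : eraseEntry p i = σ := Subsingleton.elim _ _
    simp [not_isDeletion_of_length_eq_zero, hσ, addCorner, isDeletion_mk_succ, -Sigma.exists]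
  · change IsDeletion a ⟨n + 2, insertEntry _ _ σ⟩ ↔ _
    rw [isDeletion_insertEntry]
    simp only [predAbove_endpoint, isDeletion_mk_succ, exists_exists_eq_and, addCorner]

theorem le_addCorner_iff {c : ZMod 4} {l b : PPerm} :
    l ≼ addCorner c b ↔ l ≼ b ∨ ∃ b', b' ≼ b ∧ addCorner c b' = l := by
  simpa using le_map_iff_of_isDeletion (ι := Unit) (F := addCorner c) (G := fun _ => id)
    (fun _ _ _ h => h) (by simp [isDeletion_addCorner])

theorem le_addCorner (c : ZMod 4) (b : PPerm) : b ≼ addCorner c b :=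
  le_addCorner_iff.2 (.inl (le_refl b))

@[simp]
theorem addCorner_le_addCorner {c : ZMod 4} {a b : PPerm} :
    addCorner c a ≼ addCorner c b ↔ a ≼ b := by
  rw [le_addCorner_iff]
  refine ⟨?_, fun h => .inr ⟨a, h, rfl⟩⟩
  rintro (h | ⟨b', hb', h⟩)
  · exact le_trans (le_addCorner c a) h
  · rwa [← addCorner_injective c h]

theorem eq_add_two_of_addCorner_eq {c d : ZMod 4} {a b : PPerm} (hcd : d ≠ c) (ha : 0 < a.1)
    (h : addCorner c a = addCorner d b) : d = c + 2 ∧ ∃ a', a = addCorner (c + 2) a' := by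
  obtain ⟨_ | n, σ⟩ := a
  · simp at ha
  obtain ⟨m, τ⟩ := b
  obtain rfl : n + 1 = m := by simpa [addCorner] using congrArg Sigma.fst h
  have hins := eq_of_heq (Sigma.mk.inj h).2
  have hval := (eq_insertEntry_iff.1 hins).1
  obtain hr | hr := Bool.eq_or_eq_not (isRight d) (isRight c)
  · rw [hr, insertEntry_self] at hval
    exact absurd (corner_ext hr (endpoint_injective hval).symm) hcd
  rw [hr, ← succAbove_endpoint_not, insertEntry_succAbove] at hval
  obtain ht | ht := Bool.eq_or_eq_not (isTop d) (isTop c)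
  · exact absurd (hval.trans (by rw [ht])) (succAbove_ne _ _)
  rw [ht, ← succAbove_endpoint_not (isTop c), succAbove_right_inj] at hval
  refine ⟨corner_ext (by rw [hr, isRight_add_two]) (by rw [ht, isTop_add_two]),
    ⟨n, eraseEntry σ (endpoint !isRight c)⟩, ?_⟩
  rw [addCorner, isRight_add_two, isTop_add_two, ← hval, insertEntry_eraseEntry]

theorem addCorner_le_addCorner_of_ne {c d : ZMod 4} {m u : PPerm} (hcd : d ≠ c)
    (hm : d = c + 2 → ∀ m', addCorner (c + 2) m' ≠ m) (hu : 0 < u.1) :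
    addCorner c m ≼ addCorner d u ↔ addCorner c m ≼ u := by
  refine ⟨fun h => ?_, fun h => le_trans h (le_addCorner d u)⟩
  obtain hm0 | hmpos := Nat.eq_zero_or_pos m.1
  · exact le_of_length_le_one (by simp [addCorner, hm0]) hu
  obtain h | ⟨b, -, hb⟩ := le_addCorner_iff.1 h
  · exact h
  · obtain ⟨hd, m', hm'⟩ := eq_add_two_of_addCorner_eq hcd hmpos hb.symm
    exact absurd hm'.symm (hm hd m')

theorem le_addCorner_iff_of_ne {c : ZMod 4} {l u : PPerm} (hl : ∀ m, addCorner c m ≠ l) :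
    l ≼ addCorner c u ↔ l ≼ u := by
  simp [le_addCorner_iff, hl, -Sigma.exists]

/-! ### The balloon -/

/-- The permutation `π` with a new maximum inserted at position `1`. -/
def insertPeak (π : PPerm) : PPerm := ⟨π.1 + 1, insertEntry 1 (last π.1) π.2⟩

/-- The `2413`-balloon `B(β)`: the entries `2`, `1`, `b + 3` of the balloon are successive corners
around `β`, and `b + 4` is then the peak. -/
def balloon (β : PPerm) : PPerm := insertPeak (addCorner 2 (addCorner 1 (addCorner 0 β)))

/-- The permutation `β` surrounded by three consecutive corners, starting with `c`: these are the
permutations left of the balloon after deleting one of its four outer entries. -/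
def threeCorners (c : ZMod 4) (β : PPerm) : PPerm :=
  addCorner (c + 2) (addCorner (c + 1) (addCorner c β))

theorem predAbove_one {n : ℕ} {k : Fin (n + 2)} (hk : k ≠ 0) : k.predAbove 1 = 1 := by
  obtain ⟨k, rfl⟩ := exists_succ_eq.2 hk
  rw [predAbove_of_le_castSucc _ _ (by simp [Fin.le_def]), castPred_one]

theorem insertPeak_addCorner_zero (u : PPerm) :
    insertPeak (addCorner 0 u) = addCorner 0 (addCorner 3 u) := by
  have h : insertEntry 1 (last _) (insertEntry 0 0 u.2) =
      insertEntry 0 0 (insertEntry 0 (last _) u.2) := by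
    rw [insertEntry_insertEntry]
    simp
  exact congrArg (Sigma.mk _) h

theorem insertPeak_addCorner_one {u : PPerm} (hu : 0 < u.1) :
    insertPeak (addCorner 1 u) = addCorner 1 (insertPeak u) := by
  obtain ⟨_ | n, σ⟩ := u
  · exact absurd hu (lt_irrefl 0)
  have h : insertEntry 1 (last _) (insertEntry (last _) 0 σ) =
      insertEntry (last _) 0 (insertEntry 1 (last _) σ) := by
    rw [insertEntry_insertEntry, predAbove_one (by simp),
      succAbove_ne_last_last (by simp [Fin.ext_iff])]
    simp
  exact congrArg (Sigma.mk _) h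

theorem exists_corner (c : ZMod 4) {P : ZMod 4 → Prop} :
    (∃ d, P d) ↔ P c ∨ P (c + 1) ∨ P (c + 2) ∨ P (c + 3) := by
  have hcases : ∀ c d : ZMod 4, d = c ∨ d = c + 1 ∨ d = c + 2 ∨ d = c + 3 := by decide
  refine ⟨fun ⟨d, hd⟩ => ?_, by rintro (h | h | h | h) <;> exact ⟨_, h⟩⟩
  obtain rfl | rfl | rfl | rfl := hcases c d <;> simp [hd]

theorem isDeletion_insertPeak {n : ℕ} {a : PPerm} {σ : Perm (Fin (n + 2))} :
    IsDeletion a (insertPeak ⟨n + 2, σ⟩) ↔ (⟨n + 2, σ⟩ : PPerm) = a ∨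
      addCorner 3 ⟨n + 1, eraseEntry σ 0⟩ = a ∨
      ∃ k : Fin (n + 1), insertPeak ⟨n + 1, eraseEntry σ k.succ⟩ = a := by
  change IsDeletion a ⟨n + 3, insertEntry 1 (last _) σ⟩ ↔ _
  rw [isDeletion_insertEntry, Fin.exists_fin_succ]
  simp only [predAbove_right_last, predAbove_one (succ_ne_zero _)]
  rfl

theorem insertPeak_eq_threeCorners_two (β : PPerm) :
    insertPeak (addCorner 2 (addCorner 0 β)) = threeCorners 2 β := by
  have hcomm : addCorner 2 (addCorner 0 β) = addCorner 0 (addCorner 2 β) :=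
    (addCorner_opposite_comm 0 β).symm
  rw [hcomm, insertPeak_addCorner_zero]
  rfl

theorem insertPeak_eq_threeCorners_three (β : PPerm) :
    insertPeak (addCorner 1 (addCorner 0 β)) = threeCorners 3 β := by
  rw [insertPeak_addCorner_one (Nat.succ_pos _), insertPeak_addCorner_zero]
  rfl

theorem isDeletion_balloon {a β : PPerm} : IsDeletion a (balloon β) ↔
    (∃ c, threeCorners c β = a) ∨ ∃ β', IsDeletion β' β ∧ balloon β' = a := by
  obtain ⟨b, σ⟩ := β
  set τ : Perm (Fin (b + 3)) :=
    insertEntry (last _) (last _) (insertEntry (last _) 0 (insertEntry 0 0 σ)) with hτ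
  have hpeak : ⟨b + 3, τ⟩ = threeCorners 0 ⟨b, σ⟩ := rfl
  have hfirst : addCorner 3 ⟨b + 2, eraseEntry τ 0⟩ = threeCorners 1 ⟨b, σ⟩ := by
    have h : eraseEntry τ (0 : Fin (b + 1)).castSucc.castSucc =
        insertEntry (last _) (last _) (insertEntry (last _) 0 σ) := by
      simp only [hτ, eraseEntry_insertEntry_last_castSucc, eraseEntry_insertEntry_self,
        predAbove_right_last, predAbove_right_zero]
    rw [castSucc_zero, castSucc_zero] at h
    rw [h]
    rfl
  have hbeforeLast :
      insertPeak ⟨b + 2, eraseEntry τ (last b).castSucc.succ⟩ = threeCorners 2 ⟨b, σ⟩ := by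
    rw [succ_castSucc, succ_last, hτ, eraseEntry_insertEntry_last_castSucc,
      eraseEntry_insertEntry_self, predAbove_right_last]
    exact insertPeak_eq_threeCorners_two ⟨b, σ⟩
  have hlast : insertPeak ⟨b + 2, eraseEntry τ (last (b + 1)).succ⟩ = threeCorners 3 ⟨b, σ⟩ := by
    rw [hτ, succ_last, eraseEntry_insertEntry_self]
    exact insertPeak_eq_threeCorners_three ⟨b, σ⟩
  have hinner : (∃ t : Fin b, insertPeak ⟨b + 2, eraseEntry τ t.castSucc.castSucc.succ⟩ = a) ↔
      ∃ β', IsDeletion β' ⟨b, σ⟩ ∧ balloon β' = a := by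
    obtain _ | b := b
    · simp [not_isDeletion_of_length_eq_zero]
    simp only [isDeletion_mk_succ, exists_exists_eq_and, succ_castSucc, hτ,
      eraseEntry_insertEntry_last_castSucc, eraseEntry_insertEntry_zero_succ,
      predAbove_right_last, predAbove_right_zero]
    rfl
  change IsDeletion a (insertPeak ⟨b + 3, τ⟩) ↔ _
  rw [isDeletion_insertPeak, Fin.exists_fin_succ', Fin.exists_fin_succ', hinner, hpeak, hfirst,
    hbeforeLast, hlast, exists_corner 0]
  simp only [zero_add, or_assoc, or_comm, or_left_comm]

theorem insertPeak_injective : Function.Injective insertPeak := by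
  rintro ⟨n, σ⟩ ⟨m, τ⟩ h
  obtain rfl : n = m := by simpa [insertPeak] using congrArg Sigma.fst h
  obtain _ | n := n
  · simp [Subsingleton.elim σ τ]
  · simpa using congrArg (eraseEntry · 1) (eq_of_heq (Sigma.mk.inj h).2)

theorem balloon_injective : Function.Injective balloon :=
  insertPeak_injective.comp <| (addCorner_injective 2).comp <|
    (addCorner_injective 1).comp (addCorner_injective 0)

theorem threeCorners_le_threeCorners {c : ZMod 4} {a b : PPerm} (h : a ≼ b) :
    threeCorners c a ≼ threeCorners c b := by
  simpa only [threeCorners, addCorner_le_addCorner] using h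

theorem le_balloon_iff {l β : PPerm} :
    l ≼ balloon β ↔ (∃ c, l ≼ threeCorners c β) ∨ ∃ β', β' ≼ β ∧ balloon β' = l :=
  le_map_iff_of_isDeletion (F := balloon) (G := threeCorners)
    (fun _ _ _ => threeCorners_le_threeCorners) isDeletion_balloon

theorem isBalloon2413_balloon (β : PPerm) : IsBalloon2413 β (balloon β) := by
  obtain ⟨b, σ⟩ := β
  refine ⟨rfl, ?_⟩
  set τ : Perm (Fin (b + 3)) :=
    insertEntry (last _) (last _) (insertEntry (last _) 0 (insertEntry 0 0 σ)) with hτ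
  change ∀ p : Fin (b + 4), ((p : ℕ) = 0 → (insertEntry 1 (last _) τ p : ℕ) = 1) ∧
    ((p : ℕ) = 1 → (insertEntry 1 (last _) τ p : ℕ) = b + 3) ∧
    (∀ t : Fin b, (p : ℕ) = t + 2 → (insertEntry 1 (last _) τ p : ℕ) = σ t + 2) ∧
    ((p : ℕ) = b + 2 → (insertEntry 1 (last _) τ p : ℕ) = 0) ∧
    ((p : ℕ) = b + 3 → (insertEntry 1 (last _) τ p : ℕ) = b + 2)
  rw [Fin.forall_iff_succAbove 1, Fin.forall_fin_succ', Fin.forall_fin_succ', Fin.forall_fin_succ]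
  simp only [insertEntry_self, insertEntry_succAbove, hτ, insertEntry_last_castSucc,
    insertEntry_zero_succ]
  have hne (t : Fin b) : (t : ℕ) ≠ b ∧ (t : ℕ) ≠ b + 1 := by lia
  simp [Fin.succAbove, Fin.lt_def, Fin.val_inj, hne, (hne _).1.symm, (hne _).2.symm]

theorem eq_of_isBalloon2413 {β π π' : PPerm} (h : IsBalloon2413 β π) (h' : IsBalloon2413 β π') :
    π = π' := by
  obtain ⟨n, p⟩ := π
  obtain ⟨n', p'⟩ := π'
  obtain ⟨rfl, h⟩ := h
  obtain ⟨rfl, h'⟩ := h'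
  congr 1
  ext k
  obtain ⟨h0, h1, hinner, hb2, hb3⟩ := h k
  obtain ⟨h0', h1', hinner', hb2', hb3'⟩ := h' k
  obtain hk | hk | hk | hk | ⟨t, ht⟩ : (k : ℕ) = 0 ∨ (k : ℕ) = 1 ∨ (k : ℕ) = β.1 + 2 ∨
      (k : ℕ) = β.1 + 3 ∨ ∃ t : Fin β.1, (k : ℕ) = t + 2 := by
    by_cases ht : 2 ≤ (k : ℕ) ∧ (k : ℕ) - 2 < β.1
    · exact .inr (.inr (.inr (.inr ⟨⟨k - 2, ht.2⟩, by simp only; lia⟩)))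
    · have : (k : ℕ) < β.1 + 4 := k.isLt
      lia
  · rw [h0 hk, h0' hk]
  · rw [h1 hk, h1' hk]
  · rw [hb2 hk, hb2' hk]
  · rw [hb3 hk, hb3' hk]
  · rw [hinner t ht, hinner' t ht]

theorem isBalloon2413_iff {β π : PPerm} : IsBalloon2413 β π ↔ balloon β = π :=
  ⟨eq_of_isBalloon2413 (isBalloon2413_balloon β), by rintro rfl; exact isBalloon2413_balloon β⟩

theorem addCorner_ne_balloon (c : ZMod 4) (a β : PPerm) : addCorner c a ≠ balloon β := by
  intro h
  obtain ⟨hlen, hval⟩ := isBalloon2413_iff.2 h.symm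
  have hcorner : (addCorner c a).2 (endpoint (isRight c)) = endpoint (isTop c) :=
    insertEntry_self _ _ _
  obtain ⟨hfirst, -, -, -, hlast⟩ := hval (endpoint (isRight c))
  rw [hcorner] at hfirst hlast
  replace hlen : a.1 + 1 = β.1 + 4 := hlen
  generalize isRight c = r at *
  generalize isTop c = t at *
  cases r <;> cases t <;> simp [endpoint] at hfirst hlast <;> lia

/-! ### Inclusion–exclusion over the outer entries -/

/-- The zeta function of the permutation pattern poset, which `mu` inverts. -/
noncomputable def zeta (l π : PPerm) : ℤ := if l ≼ π then 1 else 0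

/-- The expression that inclusion–exclusion suggests for the indicator of the union of the four
lower sets below the permutations `threeCorners c β`: the common part of any of these lower sets
is replaced by the lower set below `β` surrounded by the corners they share. -/
noncomputable def outerSum (l β : PPerm) : ℤ :=
  ∑ c, zeta l (threeCorners c β) -
    (∑ c : ZMod 4, zeta l (addCorner (c + 1) (addCorner c β)) +
      (zeta l (addCorner 2 (addCorner 0 β)) + zeta l (addCorner 3 (addCorner 1 β)))) +
    ∑ c, zeta l (addCorner c β) - zeta l β

theorem sum_corner (c : ZMod 4) (f : ZMod 4 → ℤ) :
    ∑ d, f d = f c + f (c + 1) + f (c + 2) + f (c + 3) := by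
  rw [← Equiv.sum_comp (Equiv.addLeft c) f]
  have h : ∑ d, f (c + d) = f (c + 0) + f (c + 1) + f (c + 2) + f (c + 3) :=
    Fin.sum_univ_four fun d : ZMod 4 => f (c + d)
  rwa [add_zero] at h

theorem zeta_opposite_corners (c : ZMod 4) (l β : PPerm) :
    zeta l (addCorner 2 (addCorner 0 β)) + zeta l (addCorner 3 (addCorner 1 β)) =
      zeta l (addCorner (c + 2) (addCorner c β)) +
        zeta l (addCorner (c + 3) (addCorner (c + 1) β)) := by
  have h02 : addCorner 0 (addCorner 2 β) = addCorner 2 (addCorner 0 β) :=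
    addCorner_opposite_comm 0 β
  have h13 : addCorner 1 (addCorner 3 β) = addCorner 3 (addCorner 1 β) :=
    addCorner_opposite_comm 1 β
  fin_cases c
  · rfl
  · change _ = _ + zeta l (addCorner 0 (addCorner 2 β))
    rw [h02, add_comm]
    rfl
  · change _ = zeta l (addCorner 0 (addCorner 2 β)) + zeta l (addCorner 1 (addCorner 3 β))
    rw [h02, h13]
  · change _ = zeta l (addCorner 1 (addCorner 3 β)) + zeta l (addCorner 2 (addCorner 0 β))
    rw [h13, add_comm]

theorem outerSum_eq (c : ZMod 4) (l β : PPerm) : outerSum l β =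
    zeta l (addCorner (c + 2) (addCorner (c + 1) (addCorner c β))) +
    zeta l (addCorner (c + 3) (addCorner (c + 2) (addCorner (c + 1) β))) +
    zeta l (addCorner c (addCorner (c + 3) (addCorner (c + 2) β))) +
    zeta l (addCorner (c + 1) (addCorner c (addCorner (c + 3) β))) -
    (zeta l (addCorner (c + 1) (addCorner c β)) +
      zeta l (addCorner (c + 2) (addCorner (c + 1) β)) +
      zeta l (addCorner (c + 3) (addCorner (c + 2) β)) +
      zeta l (addCorner c (addCorner (c + 3) β)) +
      (zeta l (addCorner (c + 2) (addCorner c β)) +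
        zeta l (addCorner (c + 3) (addCorner (c + 1) β)))) +
    (zeta l (addCorner c β) + zeta l (addCorner (c + 1) β) + zeta l (addCorner (c + 2) β) +
      zeta l (addCorner (c + 3) β)) - zeta l β := by
  have hmod : (1 + 1 : ZMod 4) = 2 ∧ (1 + 2 : ZMod 4) = 3 ∧ (2 + 1 : ZMod 4) = 3 ∧
      (2 + 2 : ZMod 4) = 0 ∧ (3 + 1 : ZMod 4) = 0 ∧ (3 + 2 : ZMod 4) = 1 := by decide
  simp only [outerSum, sum_corner c, zeta_opposite_corners c, threeCorners, add_assoc c, hmod,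
    add_zero]

theorem addCorner_le_addCorner_adjacent {c d : ZMod 4} (h : d = c + 1 ∨ d = c + 3)
    {m u : PPerm} (hu : 0 < u.1) : addCorner c m ≼ addCorner d u ↔ addCorner c m ≼ u := by
  have hd : d ≠ c ∧ d ≠ c + 2 := by
    revert c d
    decide
  exact addCorner_le_addCorner_of_ne hd.1 (fun h => absurd h hd.2) hu

theorem addCorner_le_addCorner_opposite {c : ZMod 4} {m u : PPerm}
    (hm : ∀ m', addCorner (c + 2) m' ≠ m) (hu : 0 < u.1) :
    addCorner c m ≼ addCorner (c + 2) u ↔ addCorner c m ≼ u :=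
  addCorner_le_addCorner_of_ne (mt add_eq_left.1 (by decide)) (fun _ => hm) hu

theorem addCorner_addCorner_le_addCorner_opposite {c : ZMod 4} {m u : PPerm} :
    addCorner c (addCorner (c + 2) m) ≼ addCorner (c + 2) u ↔ addCorner c m ≼ u := by
  rw [addCorner_opposite_comm, addCorner_le_addCorner]

theorem addCorner_le_balloon_iff_exists {c : ZMod 4} {m β : PPerm} :
    addCorner c m ≼ balloon β ↔
      addCorner c m ≼ addCorner (c + 2) (addCorner (c + 1) (addCorner c β)) ∨
      addCorner c m ≼ addCorner (c + 3) (addCorner (c + 2) (addCorner (c + 1) β)) ∨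
      addCorner c m ≼ addCorner c (addCorner (c + 3) (addCorner (c + 2) β)) ∨
      addCorner c m ≼ addCorner (c + 1) (addCorner c (addCorner (c + 3) β)) := by
  have hmod : (1 + 1 : ZMod 4) = 2 ∧ (1 + 2 : ZMod 4) = 3 ∧ (2 + 1 : ZMod 4) = 3 ∧
      (2 + 2 : ZMod 4) = 0 ∧ (3 + 1 : ZMod 4) = 0 ∧ (3 + 2 : ZMod 4) = 1 := by decide
  simp only [le_balloon_iff, exists_corner c, (addCorner_ne_balloon _ _ _).symm, and_false,
    exists_false, or_false, threeCorners, add_assoc c, hmod, add_zero]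

section LoneCorner

variable {c : ZMod 4} {m β : PPerm}

theorem addCorner_le_balloon_iff (hm : ∀ m', addCorner (c + 2) m' ≠ m) (hβ : 0 < β.1) :
    addCorner c m ≼ balloon β ↔ m ≼ addCorner (c + 3) (addCorner (c + 2) β) := by
  have hm_le (h : addCorner c m ≼ β) : m ≼ β := le_trans (le_addCorner c m) h
  have hβ_le (h : m ≼ β) : m ≼ addCorner (c + 3) β := le_trans h (le_addCorner _ β)
  have h_le (h : m ≼ addCorner (c + 3) β) : m ≼ addCorner (c + 3) (addCorner (c + 2) β) :=
    le_trans h (addCorner_le_addCorner.2 (le_addCorner _ β))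
  simp only [addCorner_le_balloon_iff_exists, addCorner_le_addCorner,
    addCorner_le_addCorner_adjacent (.inl rfl), addCorner_le_addCorner_adjacent (.inr rfl),
    addCorner_le_addCorner_opposite hm, addCorner_length_pos, hβ]
  tauto

theorem outerSum_addCorner (hm : ∀ m', addCorner (c + 2) m' ≠ m) (hβ : 0 < β.1) :
    outerSum (addCorner c m) β = zeta m (addCorner (c + 3) (addCorner (c + 2) β)) := by
  simp only [outerSum_eq c, zeta, addCorner_le_addCorner,
    addCorner_le_addCorner_adjacent (.inl rfl), addCorner_le_addCorner_adjacent (.inr rfl),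
    addCorner_le_addCorner_opposite hm, addCorner_length_pos, hβ]
  ring

end LoneCorner

section OppositeCorners

variable {c : ZMod 4} {m β : PPerm}

theorem addCorner_two_le_addCorner_three (hβ : 0 < β.1) :
    addCorner (c + 2) m ≼ addCorner (c + 3) β ↔ addCorner (c + 2) m ≼ β :=
  addCorner_le_addCorner_adjacent (.inl (by rw [add_assoc]; rfl)) hβ

theorem addCorner_addCorner_le_balloon_iff (hβ : 0 < β.1) :
    addCorner c (addCorner (c + 2) m) ≼ balloon β ↔ m ≼ β := by
  have hm_le {d : ZMod 4} (h : addCorner d m ≼ β) : m ≼ β := le_trans (le_addCorner d m) h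
  simp only [addCorner_le_balloon_iff_exists, addCorner_le_addCorner,
    addCorner_le_addCorner_adjacent (.inl rfl), addCorner_le_addCorner_adjacent (.inr rfl),
    addCorner_addCorner_le_addCorner_opposite, addCorner_two_le_addCorner_three,
    addCorner_length_pos, hβ]
  exact ⟨by rintro (h | h | h | h) <;> first | exact h | exact hm_le h, .inl⟩

theorem outerSum_addCorner_addCorner (hβ : 0 < β.1) :
    outerSum (addCorner c (addCorner (c + 2) m)) β = zeta m β := by
  simp only [outerSum_eq c, zeta, addCorner_le_addCorner,
    addCorner_le_addCorner_adjacent (.inl rfl), addCorner_le_addCorner_adjacent (.inr rfl),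
    addCorner_addCorner_le_addCorner_opposite, addCorner_two_le_addCorner_three,
    addCorner_length_pos, hβ]
  ring

end OppositeCorners

theorem outerSum_of_forall_addCorner_ne {l : PPerm} (hl : ∀ c m, addCorner c m ≠ l) (β : PPerm) :
    outerSum l β = zeta l β := by
  simp only [outerSum_eq 0, zeta, le_addCorner_iff_of_ne (hl _)]
  ring

theorem le_balloon_iff_of_forall_addCorner_ne {l β : PPerm} (hl : ∀ c m, addCorner c m ≠ l) :
    l ≼ balloon β ↔ l ≼ β ∨ ∃ β', β' ≼ β ∧ balloon β' = l := by
  simp only [le_balloon_iff, threeCorners, le_addCorner_iff_of_ne (hl _), exists_const]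

theorem le_balloon (β : PPerm) : β ≼ balloon β :=
  le_balloon_iff.2 <| .inl ⟨0, le_trans (le_addCorner 0 β) <|
    le_trans (le_addCorner (0 + 1) _) (le_addCorner (0 + 2) _)⟩

theorem balloon_le_balloon_iff {b β : PPerm} : balloon b ≼ balloon β ↔ b ≼ β := by
  simp only [le_balloon_iff_of_forall_addCorner_ne (addCorner_ne_balloon · · b),
    balloon_injective.eq_iff, exists_eq_right, or_iff_right_iff_imp]
  exact le_trans (le_balloon b)

theorem zeta_balloon_eq_outerSum {l β : PPerm} (hl : ∀ b, balloon b ≠ l) (hβ : 0 < β.1) :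
    zeta l (balloon β) = outerSum l β := by
  by_cases hcorner : ∀ c m, addCorner c m ≠ l
  · rw [outerSum_of_forall_addCorner_ne hcorner, zeta, zeta,
      le_balloon_iff_of_forall_addCorner_ne hcorner]
    simp only [hl, and_false, exists_false, or_false]
  push Not at hcorner
  obtain ⟨c, m, rfl⟩ := hcorner
  by_cases hm : ∀ m', addCorner (c + 2) m' ≠ m
  · rw [outerSum_addCorner hm hβ, zeta, addCorner_le_balloon_iff hm hβ, zeta]
  push Not at hm
  obtain ⟨m, rfl⟩ := hm
  rw [outerSum_addCorner_addCorner hβ, zeta, addCorner_addCorner_le_balloon_iff hβ, zeta]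

theorem outerSum_balloon (b β : PPerm) : outerSum (balloon b) β = zeta (balloon b) β :=
  outerSum_of_forall_addCorner_ne (addCorner_ne_balloon · · b) β

theorem zeta_balloon_balloon (b β : PPerm) : zeta (balloon b) (balloon β) = zeta b β := by
  simp only [zeta, balloon_le_balloon_iff]

/-! ### Möbius inversion -/

theorem muAux_eq_muAux {m n : ℕ} {σ π : PPerm} (hm : π.1 < m) (hn : π.1 < n) :
    muAux m σ π = muAux n σ π := by
  induction m generalizing n π with
  | zero => lia
  | succ m ih =>
    obtain _ | n := n
    · lia
    have hsum {k : ℕ} (hk : k ∈ Finset.range π.1) (p : Perm (Fin k)) :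
        muAux m σ ⟨k, p⟩ = muAux n σ ⟨k, p⟩ := by
      have := Finset.mem_range.1 hk
      exact ih (by simp only; lia) (by simp only; lia)
    simp only [muAux]
    congr 3
    exact Finset.sum_congr rfl fun k hk => Finset.sum_congr rfl fun p _ => hsum hk p

/-- The permutations of length less than `N`. -/
def shorter (N : ℕ) : Finset PPerm := (Finset.range N).sigma fun _ => Finset.univ

@[simp]
theorem mem_shorter {N : ℕ} {π : PPerm} : π ∈ shorter N ↔ π.1 < N := by
  simp [shorter]

theorem mu_self (σ : PPerm) : mu σ σ = 1 := by simp [mu, muAux]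

theorem mu_eq_zero_of_not_le {σ π : PPerm} (h : ¬ σ ≼ π) : mu σ π = 0 := by
  have hne : σ ≠ π := by rintro rfl; exact h (le_refl σ)
  simp [mu, muAux, h, hne]

theorem mu_eq_neg_sum {σ π : PPerm} (hne : π ≠ σ) :
    mu σ π = -∑ l ∈ shorter π.1, mu σ l * zeta l π := by
  by_cases h : σ ≼ π
  · rw [mu, muAux, if_neg hne.symm, if_pos h, shorter, Finset.sum_sigma]
    congr 1
    refine Finset.sum_congr rfl fun k hk => ?_
    rw [Finset.sum_filter]
    refine Finset.sum_congr rfl fun p _ => ?_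
    have hmu : muAux π.1 σ ⟨k, p⟩ = mu σ ⟨k, p⟩ :=
      muAux_eq_muAux (Finset.mem_range.1 hk) (Nat.lt_succ_self k)
    rw [hmu, zeta]
    by_cases hσ : σ ≼ ⟨k, p⟩ <;> by_cases hπ : ⟨k, p⟩ ≼ π <;>
      simp [hσ, hπ, mu_eq_zero_of_not_le]
  · rw [mu_eq_zero_of_not_le h, Finset.sum_eq_zero, neg_zero]
    intro l _
    by_cases hσ : σ ≼ l
    · simp [zeta, mt (le_trans hσ) h]
    · simp [mu_eq_zero_of_not_le hσ]

theorem sum_mul_zeta_eq_add {N : ℕ} {π : PPerm} (hπ : π.1 < N) (f : PPerm → ℤ) :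
    ∑ l ∈ shorter N, f l * zeta l π = f π + ∑ l ∈ shorter π.1, f l * zeta l π := by
  have hsub : insert π (shorter π.1) ⊆ shorter N := by
    intro l
    simp only [Finset.mem_insert, mem_shorter]
    rintro (rfl | h) <;> lia
  have hzero (l : PPerm) (hl : l ∉ insert π (shorter π.1)) : f l * zeta l π = 0 := by
    simp only [Finset.mem_insert, mem_shorter, not_or, not_lt] at hl
    simp [zeta, mt (eq_of_le_of_length_le · hl.2) hl.1]
  rw [← Finset.sum_subset hsub fun l _ => hzero l, Finset.sum_insert (by simp), zeta,
    if_pos (le_refl π), mul_one]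

theorem sum_mul_zeta_eq_sum_mul_zeta {M N : ℕ} {π : PPerm} (hM : π.1 < M) (hN : π.1 < N)
    (f : PPerm → ℤ) : ∑ l ∈ shorter M, f l * zeta l π = ∑ l ∈ shorter N, f l * zeta l π := by
  rw [sum_mul_zeta_eq_add hM, sum_mul_zeta_eq_add hN]

theorem sum_mu_mul_zeta {N : ℕ} {σ π : PPerm} (hπ : π.1 < N) :
    ∑ l ∈ shorter N, mu σ l * zeta l π = if π = σ then 1 else 0 := by
  rw [sum_mul_zeta_eq_add hπ]
  split_ifs with h
  · subst h
    rw [mu_self, Finset.sum_eq_zero, add_zero]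
    intro l hl
    have hnle : ¬ π ≼ l := fun h => (length_le_of_le h).not_gt (mem_shorter.1 hl)
    rw [mu_eq_zero_of_not_le hnle, zero_mul]
  · rw [mu_eq_neg_sum h, neg_add_cancel]

theorem sum_mu_mul_zeta_of_ne {N : ℕ} {σ π : PPerm} (hπ : π.1 < N) (h : π ≠ σ) :
    ∑ l ∈ shorter N, mu σ l * zeta l π = 0 := by
  rw [sum_mu_mul_zeta hπ, if_neg h]

theorem sum_mu_mul_outerSum {N : ℕ} {σ β : PPerm} (hσ : σ.1 ≤ β.1) (hN : β.1 + 3 < N) :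
    ∑ l ∈ shorter N, mu σ l * outerSum l β = -∑ l ∈ shorter N, mu σ l * zeta l β := by
  have hlonger {π : PPerm} (hβπ : β.1 < π.1) (hπ : π.1 < N) :
      ∑ l ∈ shorter N, mu σ l * zeta l π = 0 := by
    refine sum_mu_mul_zeta_of_ne hπ ?_
    rintro rfl
    exact hσ.not_gt hβπ
  simp only [outerSum_eq 0, mul_add, mul_sub, Finset.sum_add_distrib, Finset.sum_sub_distrib]
  simp (disch := simp only [addCorner_length]; lia) only [hlonger]
  ring

theorem sum_ite_exists_balloon {N : ℕ} (f : PPerm → ℤ) :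
    ∑ l ∈ shorter (N + 4), (if ∃ b, balloon b = l then f l else 0) =
      ∑ b ∈ shorter N, f (balloon b) := by
  have himage : (shorter (N + 4)).filter (fun l => ∃ b, balloon b = l) =
      (shorter N).image balloon := by
    ext l
    simp only [Finset.mem_filter, Finset.mem_image, mem_shorter]
    constructor
    · rintro ⟨hl, b, rfl⟩
      exact ⟨b, by simpa [balloon, insertPeak, addCorner] using hl, rfl⟩
    · rintro ⟨b, hb, rfl⟩
      exact ⟨by simpa [balloon, insertPeak, addCorner] using hb, b, rfl⟩
  rw [← Finset.sum_filter, himage, Finset.sum_image balloon_injective.injOn]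

theorem sum_mu_balloon_mul_zeta {σ β : PPerm} (hσ : σ.1 ≤ β.1) (hβ : 0 < β.1) :
    ∑ l ∈ shorter (β.1 + 1), (mu σ (balloon l) - mu σ l -
      if ∃ b, balloon b = l then mu σ l else 0) * zeta l β = 0 := by
  have hsplit (l : PPerm) : mu σ l * zeta l (balloon β) = mu σ l * outerSum l β +
      if ∃ b, balloon b = l then mu σ l * (zeta l (balloon β) - zeta l β) else 0 := by
    split_ifs with hl
    · obtain ⟨b, rfl⟩ := hl
      rw [outerSum_balloon]
      ring
    · rw [zeta_balloon_eq_outerSum (not_exists.1 hl) hβ, add_zero]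
  have hinner : ∑ b ∈ shorter (β.1 + 1), mu σ (balloon b) * zeta (balloon b) β =
      ∑ l ∈ shorter (β.1 + 1), (if ∃ b, balloon b = l then mu σ l else 0) * zeta l β := by
    rw [← sum_ite_exists_balloon fun l => mu σ l * zeta l β,
      sum_mul_zeta_eq_sum_mul_zeta (Nat.lt_succ_self _) (show β.1 < β.1 + 1 + 4 by lia)]
    simp only [ite_mul, zero_mul]
  have houter : ∑ l ∈ shorter (β.1 + 1 + 4), mu σ l * outerSum l β =
      -∑ l ∈ shorter (β.1 + 1), mu σ l * zeta l β := by
    rw [sum_mu_mul_outerSum hσ (show β.1 + 3 < β.1 + 1 + 4 by lia),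
      sum_mul_zeta_eq_sum_mul_zeta (by lia) (Nat.lt_succ_self _)]
  have hlen : (balloon β).1 = β.1 + 4 := rfl
  have hsum : ∑ l ∈ shorter (β.1 + 1 + 4), mu σ l * zeta l (balloon β) = 0 :=
    sum_mu_mul_zeta_of_ne (by lia) fun h => by lia
  rw [Finset.sum_congr rfl fun l _ => hsplit l, Finset.sum_add_distrib, houter,
    sum_ite_exists_balloon] at hsum
  simp only [zeta_balloon_balloon, mul_sub, Finset.sum_sub_distrib, hinner] at hsum
  simp only [sub_mul, Finset.sum_sub_distrib]
  linarith

theorem eq_zero_of_sum_mul_zeta {H : PPerm → ℤ}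
    (hH : ∀ β : PPerm, 0 < β.1 → ∑ l ∈ shorter (β.1 + 1), H l * zeta l β = 0) {β : PPerm}
    (hβ : 2 ≤ β.1) : H β = 0 := by
  induction β using (measure (Sigma.fst : PPerm → ℕ)).wf.induction with
  | _ β ih =>
    have hsub : shorter (one.1 + 1) ⊆ shorter β.1 := fun l hl =>
      mem_shorter.2 ((mem_shorter.1 hl).trans_le hβ)
    have hshort : ∑ l ∈ shorter β.1, H l * zeta l β =
        ∑ l ∈ shorter (one.1 + 1), H l * zeta l one := by
      rw [← Finset.sum_subset hsub]
      · refine Finset.sum_congr rfl fun l hl => ?_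
        have hl1 : l.1 ≤ 1 := Nat.lt_succ_iff.1 (mem_shorter.1 hl)
        rw [zeta, zeta, if_pos (le_of_length_le_one hl1 (by lia)),
          if_pos (le_of_length_le_one hl1 Nat.one_pos)]
      · intro l hl hl2
        rw [ih l (mem_shorter.1 hl) (not_lt.1 (mt mem_shorter.2 hl2)), zero_mul]
    have hsum := hH β (by lia)
    rwa [sum_mul_zeta_eq_add (Nat.lt_succ_self _), hshort, hH one Nat.one_pos, add_zero] at hsum

theorem mu_balloon {β : PPerm} (hβ : 2 ≤ β.1) :
    mu one (balloon β) = mu one β + if ∃ γ, balloon γ = β then mu one β else 0 := by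
  have h := eq_zero_of_sum_mul_zeta (fun _ h => sum_mu_balloon_mul_zeta (σ := one) h h) hβ
  linarith

end PPerm

theorem mu_double_balloon_general (β π : PPerm) (hβ : 2 ≤ β.1) (hπ : IsBalloon2413 β π) :
    mu PPerm.one π =
      if ∃ γ, IsBalloon2413 γ β then 2 * mu PPerm.one β else mu PPerm.one β := by
  simp only [PPerm.isBalloon2413_iff] at hπ ⊢
  rw [← hπ, PPerm.mu_balloon hβ]
  split_ifs <;> ring

/-- **(Theorem `theorem-2413-balloon-beta-is-a-balloon`.)**  If `β` is a
nonempty permutation which is itself a 2413-balloon, i.e. `β = B(γ)` for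
some nonempty permutation `γ`, and `π = B(β)`, then `μ(1,π) = 2·μ(1,β)`. -/
theorem mu_double_balloon (γ β π : PPerm) (hγ : 0 < γ.1)
    (hβ : IsBalloon2413 γ β) (hπ : IsBalloon2413 β π) :
    mu PPerm.one π = 2 * mu PPerm.one β := by
  rw [mu_double_balloon_general β π (by have := hβ.1; lia) hπ, if_pos ⟨γ, hβ⟩]
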